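/- Let u(x) = u_0 + u_1 x + ... + u_m x^m be a polynomial over the p-adic field Q_p with u_0 u_m ≠ 0. If the Newton polygon of u has a segment from (r, ν_p(u_r)) to (s, ν_p(u_s)) with r < s and slope −k, then u has exactly s − r roots α_1, ..., α_{s−r} in an algebraic closure of Q_p, counted with multiplicity, each with valuation ν_p(α_i) = k, and the polynomial Π_{i=1}^{s−r}(x − α_i) has coefficients in Q_p. -/

import Mathlib

open Polynomial in
/-- The p-adic valuation of a nonzero algebraic element over ℚ_p, computed from its
minimal polynomial: ν(α) = ν_p(constant coefficient of minpoly) / deg(minpoly). -/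
noncomputable def algClosurePadicVal (p : ℕ) [Fact p.Prime]
    (α : AlgebraicClosure ℚ_[p]) : ℚ :=
  (((minpoly ℚ_[p] α).coeff 0).valuation : ℚ) / ((minpoly ℚ_[p] α).natDegree : ℚ)

/-!
Weigh the `i`-th coefficient of a polynomial by `‖f_i‖ * c ^ i`, where `c = p ^ (-k)`: the segment
of slope `-k` of the Newton polygon joins the first index of maximal weight to the last one. As
the norm is ultrametric, both indices are additive under multiplication of polynomials. A factor
`X - α` adds `(1, 1)`, `(0, 1)` or `(0, 0)` to them according as `‖α‖ < c`, `‖α‖ = c` or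
`c < ‖α‖`, so the difference of the two indices counts the roots of norm `c`. Galois conjugates
have equal norm, hence the monic polynomial with exactly these roots is Galois invariant.
-/

open Polynomial

theorem countP_le_eq_countP_lt_add_countP_eq {ι β : Type*} [LinearOrder β] (φ : ι → β) (c : β)
    (S : Multiset ι) :
    S.countP (φ · ≤ c) = S.countP (φ · < c) + S.countP (φ · = c) := by
  induction S using Multiset.induction_on with
  | empty => simp only [Multiset.countP_zero]
  | cons x S ih =>
    simp only [Multiset.countP_cons, ih]
    grind

section NewtonSegment

section Semiring

variable {R : Type*} [Semiring R]

/-- The weight of the `i`-th coefficient of `f`. Its negated logarithm is the height of the point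
`(i, -log (v (f.coeff i)))` of the Newton diagram over the line of slope `log c` through the
origin. -/
def coeffWeight (v : R → ℝ) (c : ℝ) (f : R[X]) (i : ℕ) : ℝ :=
  v (f.coeff i) * c ^ i

/-- The Newton polygon of `f` with respect to `v` meets its supporting line of slope `log c` exactly
above the interval `[a, b]`, a single vertex being allowed (`a = b`). Multiplicatively, `a` is the
first and `b` the last index of maximal weight. -/
structure IsNewtonSegment (v : R → ℝ) (c : ℝ) (f : R[X]) (a b : ℕ) : Prop where
  le : ∀ i, coeffWeight v c f i ≤ coeffWeight v c f a
  eq : coeffWeight v c f b = coeffWeight v c f a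
  lt : ∀ i, i < a ∨ b < i → coeffWeight v c f i < coeffWeight v c f a

theorem IsNewtonSegment.unique {v : R → ℝ} {c : ℝ} {f : R[X]} {a b a' b' : ℕ}
    (h : IsNewtonSegment v c f a b) (h' : IsNewtonSegment v c f a' b') : a = a' ∧ b = b' := by
  have hmax : coeffWeight v c f a = coeffWeight v c f a' := le_antisymm (h'.le a) (h.le a')
  refine ⟨le_antisymm ?_ ?_, le_antisymm ?_ ?_⟩ <;> by_contra! hlt
  · exact (h.lt a' (.inl hlt)).ne hmax.symm
  · exact (h'.lt a (.inl hlt)).ne hmax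
  · exact (h'.lt b (.inr hlt)).ne (h.eq.trans hmax)
  · exact (h.lt b' (.inr hlt)).ne (h'.eq.trans hmax.symm)

theorem IsNewtonSegment.map {S : Type*} [Semiring S] {v : R → ℝ} {w : S → ℝ} {φ : R →+* S}
    (hφ : ∀ x, w (φ x) = v x) {c : ℝ} {f : R[X]} {a b : ℕ} (h : IsNewtonSegment v c f a b) :
    IsNewtonSegment w c (f.map φ) a b := by
  have hweight : coeffWeight w c (f.map φ) = coeffWeight v c f := by
    ext i
    simp only [coeffWeight, coeff_map, hφ]
  constructor <;> rw [hweight]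
  exacts [h.le, h.eq, h.lt]

end Semiring

section Ring

variable {R F : Type*} [Ring R] [FunLike F R ℝ] [MulRingSeminormClass F R ℝ] {v : F} {c : ℝ}
  {f g : R[X]} {a b a' b' : ℕ}

theorem coeffWeight_nonneg (hc : 0 ≤ c) (f : R[X]) (i : ℕ) : 0 ≤ coeffWeight v c f i :=
  mul_nonneg (apply_nonneg v _) (pow_nonneg hc i)

theorem coeffWeight_mul_coeffWeight (i j : ℕ) :
    coeffWeight v c f i * coeffWeight v c g j = v (f.coeff i * g.coeff j) * c ^ (i + j) := by
  simp only [coeffWeight, map_mul, pow_add]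
  ring

theorem exists_coeffWeight_mul_le (hv : IsNonarchimedean v) (hc : 0 ≤ c) (f g : R[X]) (n : ℕ) :
    ∃ i j, i + j = n ∧
      coeffWeight v c (f * g) n ≤ coeffWeight v c f i * coeffWeight v c g j := by
  obtain ⟨⟨i, j⟩, hij, hle⟩ := hv.finset_image_add_of_nonempty
    (fun x : ℕ × ℕ ↦ f.coeff x.1 * g.coeff x.2) (t := Finset.HasAntidiagonal.antidiagonal n)
    ⟨(0, n), by simp⟩
  rw [Finset.HasAntidiagonal.mem_antidiagonal] at hij
  refine ⟨i, j, hij, ?_⟩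
  rw [coeffWeight_mul_coeffWeight, hij, coeffWeight, coeff_mul]
  exact mul_le_mul_of_nonneg_right hle (pow_nonneg hc n)

theorem coeffWeight_mul_add_eq (hv : IsNonarchimedean v) (hc : 0 ≤ c) {i j : ℕ}
    (hlt : ∀ i' j', i' + j' = i + j → (i', j') ≠ (i, j) →
      coeffWeight v c f i' * coeffWeight v c g j' < coeffWeight v c f i * coeffWeight v c g j) :
    coeffWeight v c (f * g) (i + j) = coeffWeight v c f i * coeffWeight v c g j := by
  rw [coeffWeight_mul_coeffWeight, coeffWeight, coeff_mul]
  congr 1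
  refine hv.apply_sum_eq_of_lt (fun x ↦ (map_neg_eq_map v x).symm)
    (l := fun x : ℕ × ℕ ↦ f.coeff x.1 * g.coeff x.2) (k := (i, j))
    (Finset.HasAntidiagonal.mem_antidiagonal.2 rfl) ?_
  rintro ⟨i', j'⟩ hmem hne
  have hsum : i' + j' = i + j := Finset.HasAntidiagonal.mem_antidiagonal.1 hmem
  have hterm := hlt i' j' hsum hne
  rw [coeffWeight_mul_coeffWeight, coeffWeight_mul_coeffWeight, hsum] at hterm
  exact lt_of_mul_lt_mul_right hterm (pow_nonneg hc _)

theorem IsNewtonSegment.coeffWeight_pos (hc : 0 ≤ c) (h : IsNewtonSegment v c f a b) :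
    0 < coeffWeight v c f a :=
  (coeffWeight_nonneg hc f (b + 1)).trans_lt (h.lt (b + 1) (.inr b.lt_succ_self))

theorem IsNewtonSegment.coeffWeight_mul_coeffWeight_lt (hc : 0 ≤ c)
    (hf : IsNewtonSegment v c f a b) (hg : IsNewtonSegment v c g a' b') {i j : ℕ}
    (hij : (i < a ∨ b < i) ∨ (j < a' ∨ b' < j)) :
    coeffWeight v c f i * coeffWeight v c g j < coeffWeight v c f a * coeffWeight v c g a' := by
  rcases hij with hi | hj
  · exact mul_lt_mul_of_lt_of_le_of_nonneg_of_pos (hf.lt i hi) (hg.le j)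
      (coeffWeight_nonneg hc f i) (hg.coeffWeight_pos hc)
  · exact mul_lt_mul_of_le_of_lt_of_nonneg_of_pos (hf.le i) (hg.lt j hj)
      (coeffWeight_nonneg hc g j) (hf.coeffWeight_pos hc)

theorem IsNewtonSegment.mul (hv : IsNonarchimedean v) (hc : 0 ≤ c)
    (hf : IsNewtonSegment v c f a b) (hg : IsNewtonSegment v c g a' b') :
    IsNewtonSegment v c (f * g) (a + a') (b + b') := by
  have hleft : coeffWeight v c (f * g) (a + a') = coeffWeight v c f a * coeffWeight v c g a' :=
    coeffWeight_mul_add_eq hv hc fun i j hij hne ↦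
      hf.coeffWeight_mul_coeffWeight_lt hc hg (by grind)
  have hright : coeffWeight v c (f * g) (b + b') = coeffWeight v c f b * coeffWeight v c g b' :=
    coeffWeight_mul_add_eq hv hc fun i j hij hne ↦ by
      rw [hf.eq, hg.eq]
      exact hf.coeffWeight_mul_coeffWeight_lt hc hg (by grind)
  refine ⟨fun n ↦ ?_, by rw [hright, hleft, hf.eq, hg.eq], fun n hn ↦ ?_⟩ <;> rw [hleft] <;>
    obtain ⟨i, j, rfl, hle⟩ := exists_coeffWeight_mul_le hv hc f g n
  · exact hle.trans (mul_le_mul (hf.le i) (hg.le j) (coeffWeight_nonneg hc g j)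
      (hf.coeffWeight_pos hc).le)
  · exact hle.trans_lt (hf.coeffWeight_mul_coeffWeight_lt hc hg (by omega))

theorem isNewtonSegment_C {x : R} (hx : v x ≠ 0) (c : ℝ) : IsNewtonSegment v c (C x) 0 0 := by
  have hzero : coeffWeight v c (C x) 0 = v x := by simp [coeffWeight]
  have hsucc (i : ℕ) : coeffWeight v c (C x) (i + 1) = 0 := by simp [coeffWeight]
  have hpos : 0 < v x := (apply_nonneg v x).lt_of_ne' hx
  refine ⟨fun i ↦ ?_, rfl, fun i hi ↦ ?_⟩ <;> rcases i with _ | i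
  · rfl
  · simpa only [hzero, hsucc] using hpos.le
  · omega
  · simpa only [hzero, hsucc] using hpos

theorem isNewtonSegment_X_sub_C (hc : 0 < c) (α : R) :
    IsNewtonSegment v c (X - C α) (if v α < c then 1 else 0) (if v α ≤ c then 1 else 0) := by
  have hzero : coeffWeight v c (X - C α) 0 = v α := by simp [coeffWeight]
  have hone : coeffWeight v c (X - C α) 1 = c := by simp [coeffWeight, coeff_X]
  have htwo (i : ℕ) : coeffWeight v c (X - C α) (i + 2) = 0 := by
    simp [coeffWeight, coeff_X]
  have : 0 ≤ v α := apply_nonneg v α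
  constructor
  · rintro (_ | _ | i) <;> split_ifs <;> grind
  · grind
  · rintro (_ | _ | i) <;> split_ifs <;> grind

end Ring

section CommRing

variable {R F : Type*} [CommRing R] [FunLike F R ℝ] {v : F} {c : ℝ}

theorem isNewtonSegment_prod_X_sub_C [MulRingSeminormClass F R ℝ] (hv : IsNonarchimedean v)
    (hc : 0 < c) (S : Multiset R) :
    IsNewtonSegment v c (S.map fun α ↦ X - C α).prod
      (S.countP fun α ↦ v α < c) (S.countP fun α ↦ v α ≤ c) := by
  induction S using Multiset.induction_on with
  | empty => simpa using isNewtonSegment_C (v := v) (x := 1) (by simp) c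
  | cons α S ih =>
    simp only [Multiset.map_cons, Multiset.prod_cons, Multiset.countP_cons, add_comm _ (ite _ _ _)]
    exact (isNewtonSegment_X_sub_C hc α).mul hv hc.le ih

theorem IsNewtonSegment.card_filter_roots [IsDomain R] [MulRingNormClass F R ℝ]
    (hv : IsNonarchimedean v) (hc : 0 < c) {f : R[X]} {a b : ℕ} (hf : f.Splits)
    (h : IsNewtonSegment v c f a b) : (f.roots.filter fun α ↦ v α = c).card = b - a := by
  have hlead : v f.leadingCoeff ≠ 0 := by
    have hf0 : f ≠ 0 := by
      rintro rfl
      simpa [coeffWeight] using h.coeffWeight_pos hc.le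
    rwa [map_ne_zero_iff_ne_zero, leadingCoeff_ne_zero]
  have hroots :=
    (isNewtonSegment_C hlead c).mul hv hc.le (isNewtonSegment_prod_X_sub_C hv hc f.roots)
  rw [← hf.eq_prod_roots, zero_add, zero_add] at hroots
  obtain ⟨rfl, rfl⟩ := h.unique hroots
  rw [← Multiset.countP_eq_card_filter, countP_le_eq_countP_lt_add_countP_eq,
    Nat.add_sub_cancel_left]

end CommRing

end NewtonSegment

section Galois

variable {K L : Type*} [Field K] [Field L] [Algebra K L]

theorem mem_lifts_of_forall_map_eq [IsGalois K L] {q : L[X]}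
    (hq : ∀ σ : Gal(L/K), q.map (σ : L →+* L) = q) : q ∈ lifts (algebraMap K L) := by
  rw [lifts_iff_coeff_lifts]
  intro n
  rw [InfiniteGalois.mem_range_algebraMap_iff_fixed]
  intro σ
  conv_rhs => rw [← hq σ, coeff_map]
  rfl

theorem map_prod_X_sub_C_eq_prod_map {R S : Type*} [CommRing R] [CommRing S] (φ : R →+* S)
    (T : Multiset R) :
    (T.map fun α ↦ X - C α).prod.map φ = ((T.map φ).map fun α ↦ X - C α).prod := by
  simp [Polynomial.map_multiset_prod]

theorem map_filter_roots_eq_of_splits {u : K[X]} (hu : (u.map (algebraMap K L)).Splits)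
    {P : L → Prop} [DecidablePred P] {σ : Gal(L/K)} (hP : ∀ x, P (σ x) ↔ P x) :
    ((u.map (algebraMap K L)).roots.filter P).map σ = (u.map (algebraMap K L)).roots.filter P := by
  have hroots : (u.map (algebraMap K L)).roots.map σ = (u.map (algebraMap K L)).roots := by
    have hσ : (σ : L →+* L).comp (algebraMap K L) = algebraMap K L := RingHom.ext σ.commutes
    have h := hu.roots_map (σ : L →+* L)
    rw [Polynomial.map_map, hσ] at h
    exact h.symm
  conv_rhs => rw [← hroots, Multiset.filter_map]
  simp only [Function.comp_def, hP]

theorem exists_map_eq_prod_filter_roots [IsGalois K L] {u : K[X]}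
    (hu : (u.map (algebraMap K L)).Splits) {P : L → Prop} [DecidablePred P]
    (hP : ∀ (σ : Gal(L/K)) (x : L), P (σ x) ↔ P x) :
    ∃ a : K[X], a.map (algebraMap K L) =
      (((u.map (algebraMap K L)).roots.filter P).map fun α ↦ X - C α).prod := by
  rw [← mem_lifts]
  refine mem_lifts_of_forall_map_eq fun σ ↦ ?_
  rw [map_prod_X_sub_C_eq_prod_map]
  exact congrArg (fun T : Multiset L ↦ (T.map fun α ↦ X - C α).prod)
    (map_filter_roots_eq_of_splits hu (hP σ))

end Galois

theorem stmt_12_general {K L : Type*} [NontriviallyNormedField K] [IsUltrametricDist K]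
    [CompleteSpace K] [Field L] [Algebra K L] [IsGalois K L] {u : K[X]}
    (hu : (u.map (algebraMap K L)).Splits) {c : ℝ} (hc : 0 < c) {r s : ℕ}
    (h : IsNewtonSegment norm c u r s) :
    ((u.map (algebraMap K L)).roots.filter fun α ↦ spectralNorm K L α = c).card = s - r ∧
    ∃ a : K[X], a.map (algebraMap K L) =
      (((u.map (algebraMap K L)).roots.filter fun α ↦ spectralNorm K L α = c).map
        fun α ↦ X - C α).prod := by
  have hmap : IsNewtonSegment (spectralMulAlgNorm K L) c (u.map (algebraMap K L)) r s :=
    h.map spectralNorm_extends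
  refine ⟨hmap.card_filter_roots isNonarchimedean_spectralNorm hc hu,
    exists_map_eq_prod_filter_roots hu fun σ x ↦ ?_⟩
  rw [← spectralNorm_eq_of_equiv]

section Padic

variable {p : ℕ} [Fact p.Prime]

theorem norm_padic_eq_rpow_neg_valuation {x : ℚ_[p]} (hx : x ≠ 0) :
    ‖x‖ = (p : ℝ) ^ (-(x.valuation : ℝ)) := by
  rw [Padic.norm_eq_zpow_neg_valuation hx, ← Real.rpow_intCast, Int.cast_neg]

theorem coeffWeight_padic_eq_rpow (k : ℚ) {u : ℚ_[p][X]} {i : ℕ} (hi : u.coeff i ≠ 0) :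
    coeffWeight norm ((p : ℝ) ^ (-(k : ℝ))) u i =
      (p : ℝ) ^ (-(((u.coeff i).valuation + k * i : ℚ) : ℝ)) := by
  have hp : (0 : ℝ) < p := mod_cast (Fact.out : p.Prime).pos
  rw [coeffWeight, norm_padic_eq_rpow_neg_valuation hi, ← Real.rpow_mul_natCast hp.le,
    ← Real.rpow_add hp]
  push_cast
  ring_nf

theorem isNewtonSegment_padic {u : ℚ_[p][X]} {r s : ℕ} {k : ℚ}
    (hur : u.coeff r ≠ 0) (hus : u.coeff s ≠ 0)
    (hslope : ((u.coeff s).valuation : ℚ) - (u.coeff r).valuation = -k * (s - r))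
    (habove : ∀ i, u.coeff i ≠ 0 →
      ((u.coeff r).valuation : ℚ) - k * (i - r) ≤ (u.coeff i).valuation)
    (hstrict : ∀ i, u.coeff i ≠ 0 → (i < r ∨ s < i) →
      ((u.coeff r).valuation : ℚ) - k * (i - r) < (u.coeff i).valuation) :
    IsNewtonSegment norm ((p : ℝ) ^ (-(k : ℝ))) u r s := by
  have hp : (1 : ℝ) < p := mod_cast (Fact.out : p.Prime).one_lt
  have hzero {i : ℕ} (hi : u.coeff i = 0) : coeffWeight norm ((p : ℝ) ^ (-(k : ℝ))) u i <
      coeffWeight norm ((p : ℝ) ^ (-(k : ℝ))) u r := by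
    rw [coeffWeight_padic_eq_rpow k hur, coeffWeight, hi, norm_zero, zero_mul]
    positivity
  refine ⟨fun i ↦ ?_, ?_, fun i hout ↦ ?_⟩
  · by_cases hi : u.coeff i = 0
    · exact (hzero hi).le
    rw [coeffWeight_padic_eq_rpow k hi, coeffWeight_padic_eq_rpow k hur,
      Real.rpow_le_rpow_left_iff hp, neg_le_neg_iff, Rat.cast_le]
    linarith [habove i hi]
  · rw [coeffWeight_padic_eq_rpow k hus, coeffWeight_padic_eq_rpow k hur]
    congr 3
    linarith
  · by_cases hi : u.coeff i = 0
    · exact hzero hi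
    rw [coeffWeight_padic_eq_rpow k hi, coeffWeight_padic_eq_rpow k hur,
      Real.rpow_lt_rpow_left_iff hp, neg_lt_neg_iff, Rat.cast_lt]
    linarith [hstrict i hi hout]

theorem spectralNorm_eq_rpow_neg_algClosurePadicVal {α : AlgebraicClosure ℚ_[p]} (hα : α ≠ 0) :
    spectralNorm ℚ_[p] (AlgebraicClosure ℚ_[p]) α =
      (p : ℝ) ^ (-(algClosurePadicVal p α : ℝ)) := by
  have h0 : (minpoly ℚ_[p] α).coeff 0 ≠ 0 :=
    minpoly.coeff_zero_ne_zero (Algebra.IsIntegral.isIntegral α) hα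
  rw [spectralNorm.spectralNorm_eq_norm_coeff_zero_rpow, norm_padic_eq_rpow_neg_valuation h0,
    ← Real.rpow_mul (Nat.cast_nonneg p), algClosurePadicVal]
  congr 1
  push_cast
  ring

theorem algClosurePadicVal_eq_iff {α : AlgebraicClosure ℚ_[p]} (hα : α ≠ 0) (k : ℚ) :
    algClosurePadicVal p α = k ↔
      spectralNorm ℚ_[p] (AlgebraicClosure ℚ_[p]) α = (p : ℝ) ^ (-(k : ℝ)) := by
  have hp : (1 : ℝ) < p := mod_cast (Fact.out : p.Prime).one_lt
  rw [spectralNorm_eq_rpow_neg_algClosurePadicVal hα,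
    Real.rpow_right_inj (by positivity) hp.ne', neg_inj, Rat.cast_inj]

theorem filter_roots_algClosurePadicVal_eq {u : ℚ_[p][X]} (h0 : u.coeff 0 ≠ 0) (k : ℚ)
    [DecidablePred fun α ↦ algClosurePadicVal p α = k] :
    (u.map (algebraMap ℚ_[p] (AlgebraicClosure ℚ_[p]))).roots.filter
        (fun α ↦ algClosurePadicVal p α = k) =
      (u.map (algebraMap ℚ_[p] (AlgebraicClosure ℚ_[p]))).roots.filter
        (fun α ↦ spectralNorm ℚ_[p] (AlgebraicClosure ℚ_[p]) α = (p : ℝ) ^ (-(k : ℝ))) := by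
  refine Multiset.filter_congr fun α hα ↦ algClosurePadicVal_eq_iff ?_ k
  rintro rfl
  have hroot := isRoot_of_mem_roots hα
  rw [IsRoot, ← coeff_zero_eq_eval_zero, coeff_map, map_eq_zero] at hroot
  exact h0 hroot

end Padic

open Polynomial Classical in
/-- If the Newton polygon of u (u_0 u_m ≠ 0) has a segment from
(r, ν_p(u_r)) to (s, ν_p(u_s)) with slope −k, then u has exactly s − r roots of
valuation k in the algebraic closure of ℚ_p (with multiplicity), and the product of
(x − α) over these roots has coefficients in ℚ_p. -/
theorem stmt_12 (p : ℕ) [Fact p.Prime] (u : Polynomial ℚ_[p]) (m : ℕ)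
    (hdeg : u.natDegree = m) (h0 : u.coeff 0 ≠ 0) (hm : u.coeff m ≠ 0)
    (r s : ℕ) (k : ℚ) (hrs : r < s) (hsm : s ≤ m)
    (hur : u.coeff r ≠ 0) (hus : u.coeff s ≠ 0)
    (hslope : ((u.coeff s).valuation : ℚ) - ((u.coeff r).valuation : ℚ)
        = -k * ((s : ℚ) - (r : ℚ)))
    (habove : ∀ i ≤ m, u.coeff i ≠ 0 →
      ((u.coeff r).valuation : ℚ) - k * ((i : ℚ) - (r : ℚ)) ≤ ((u.coeff i).valuation : ℚ))
    (hstrict : ∀ i ≤ m, u.coeff i ≠ 0 → (i < r ∨ s < i) →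
      ((u.coeff r).valuation : ℚ) - k * ((i : ℚ) - (r : ℚ)) < ((u.coeff i).valuation : ℚ)) :
    Multiset.card ((u.map (algebraMap ℚ_[p] (AlgebraicClosure ℚ_[p]))).roots.filter
        (fun α => algClosurePadicVal p α = k)) = s - r ∧
    ∃ a : Polynomial ℚ_[p],
      a.map (algebraMap ℚ_[p] (AlgebraicClosure ℚ_[p]))
        = (((u.map (algebraMap ℚ_[p] (AlgebraicClosure ℚ_[p]))).roots.filter
            (fun α => algClosurePadicVal p α = k)).map
              (fun α => Polynomial.X - Polynomial.C α)).prod := by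
  have hdegree (i : ℕ) (hi : u.coeff i ≠ 0) : i ≤ m := hdeg ▸ le_natDegree_of_ne_zero hi
  rw [filter_roots_algClosurePadicVal_eq h0 k]
  exact stmt_12_general (IsAlgClosed.splits _)
    (Real.rpow_pos_of_pos (mod_cast (Fact.out : p.Prime).pos) _)
    (isNewtonSegment_padic hur hus hslope (fun i hi ↦ habove i (hdegree i hi) hi)
      fun i hi ↦ hstrict i (hdegree i hi) hi)
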